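/- For every integer d ≥ 1, the expected number of real roots of a Kostlan–Shub–Smale random polynomial of degree d equals √d; that is, ∫ #Z_p dμ_d(p) = √d. -/

import Mathlib

/-!
The proof is an integral-geometric (Crofton type) argument. Writing `x = tan θ` and multiplying by
`cos θ ^ d` turns the random polynomial into the linear form `trigForm a θ = ⟨a, γ(θ)⟩`, where
`γ = curve d` has coordinates `√(binomial d j) cos^(d-j) θ sin^j θ`. By the binomial theorem
`⟨γ(s), γ(t)⟩ = cos (t - s) ^ d` (`sum_curve_mul`), so `γ` is a curve on the unit sphere, and the
real zeros of the polynomial are the zeros of `trigForm a` in `(-π/2, π/2)`.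

For a standard Gaussian vector `a` and unit vectors `u`, `v` at angle `α`, the numbers `⟨a, u⟩` and
`⟨a, v⟩` have opposite signs with probability `α / π` (`pair_prob`); this reduces to the plane by
rotation invariance, and there to polar coordinates. Cut `(-π/2, π/2)` into `m` equal cells. The
expected number of cells at whose ends `trigForm a` changes sign is then `m * α_m / π` with
`cos α_m = cos (π / m) ^ d` (`integral_signChanges`), and this tends to `√d` (`tendsto_angle`).

Almost surely no grid point is a zero and all zeros are simple (`ae_trigForm_ne`,
`ae_no_multiple`). Then the number of sign changes never exceeds the number of zeros, by the
intermediate value theorem, and equals it for large `m` (`signChanges_le`,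
`eventually_signChanges`). It is bounded by the degree `d`, so dominated convergence identifies the
expected number of zeros with the limit `√d`; it also supplies the measurability of the zero count.
-/

open MeasureTheory ProbabilityTheory Polynomial

/-- The Kostlan–Shub–Smale Gaussian measure on coefficient space: `d+1` i.i.d.
standard real Gaussians. -/
noncomputable def kssGauss (d : ℕ) : Measure (Fin (d + 1) → ℝ) :=
  Measure.pi fun _ => gaussianReal 0 1

/-- The Kostlan–Shub–Smale random polynomial associated to coefficients `a`:
`p = ∑ a_j √(binomial d j) X^j`. -/
noncomputable def kssPoly (d : ℕ) (a : Fin (d + 1) → ℝ) : Polynomial ℝ :=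
  ∑ j : Fin (d + 1), Polynomial.C (a j * Real.sqrt (d.choose j)) * Polynomial.X ^ (j : ℕ)

/-- The number of real zeros of a real polynomial. -/
noncomputable def numRealZeros (p : Polynomial ℝ) : ℕ :=
  {x : ℝ | p.eval x = 0}.ncard

/-! ### Gaussian linear forms -/

instance (d : ℕ) : IsProbabilityMeasure (kssGauss d) := by unfold kssGauss; infer_instance

/-- The linear form `a ↦ ∑ j, a j * u j`, as a continuous linear map. -/
noncomputable def lin {d : ℕ} (u : Fin (d + 1) → ℝ) : (Fin (d + 1) → ℝ) →L[ℝ] ℝ :=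
  ∑ j, u j • ContinuousLinearMap.proj (R := ℝ) (φ := fun _ : Fin (d + 1) => ℝ) j

lemma lin_apply {d : ℕ} (u a : Fin (d + 1) → ℝ) : lin u a = ∑ j, a j * u j := by
  simp [lin, mul_comm]

lemma charFunDual_gauss (L : StrongDual ℝ ℝ) :
    charFunDual (gaussianReal 0 1) L = Complex.exp (-(L 1 : ℂ) ^ 2 / 2) := by
  rw [charFunDual_eq_charFun_map_one]
  have : (gaussianReal 0 1).map L = gaussianReal 0 (NNReal.mk ((L 1) ^ 2) (sq_nonneg _)) := by
    have h : (L : ℝ → ℝ) = fun x => L 1 * x := by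
      ext x
      have := L.map_smul x (1 : ℝ)
      simp only [smul_eq_mul, mul_one] at this
      rw [this, mul_comm]
    rw [h, gaussianReal_map_const_mul]
    simp
  rw [this, charFun_gaussianReal]
  simp
  congr 1; ring

lemma charFunDual_kss {d : ℕ} (L : StrongDual ℝ (Fin (d + 1) → ℝ)) :
    charFunDual (kssGauss d) L = Complex.exp (-((∑ j, (L (Pi.single j 1)) ^ 2 : ℝ) : ℂ) / 2) := by
  rw [kssGauss, charFunDual_pi]
  simp_rw [charFunDual_gauss]
  rw [← Complex.exp_sum]
  congr 1
  push_cast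
  rw [neg_div, Finset.sum_div, ← Finset.sum_neg_distrib]
  refine Finset.sum_congr rfl fun j _ => ?_
  simp [neg_div]

lemma map_lin {d : ℕ} (u : Fin (d + 1) → ℝ) (hu : ∑ j, u j ^ 2 = 1) :
    (kssGauss d).map (lin u) = gaussianReal 0 1 := by
  have : IsProbabilityMeasure ((kssGauss d).map (lin u)) :=
    Measure.isProbabilityMeasure_map (by fun_prop)
  apply Measure.ext_of_charFunDual
  ext L
  rw [charFunDual_map, charFunDual_kss, charFunDual_gauss]
  congr 2
  have h (j) : L (u j) = u j * L 1 := by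
    have := L.map_smul (u j) (1 : ℝ)
    simpa using this
  simp [lin_apply, Pi.single_apply, h, mul_pow, ← Finset.sum_mul]
  norm_cast
  simp [hu]

/-- Two orthonormal linear forms of a standard Gaussian vector are independent standard Gaussians:
both sides have the same characteristic function. -/
lemma map_lin_prod {d : ℕ} (u w : Fin (d + 1) → ℝ) (hu : ∑ j, u j ^ 2 = 1)
    (hw : ∑ j, w j ^ 2 = 1) (huw : ∑ j, u j * w j = 0) :
    (kssGauss d).map ((lin u).prod (lin w)) = (gaussianReal 0 1).prod (gaussianReal 0 1) := by
  have : IsProbabilityMeasure ((kssGauss d).map ((lin u).prod (lin w))) :=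
    Measure.isProbabilityMeasure_map (by fun_prop)
  apply Measure.ext_of_charFunDual
  ext L
  rw [charFunDual_map, charFunDual_kss, charFunDual_prod, charFunDual_gauss, charFunDual_gauss,
    ← Complex.exp_add]
  congr 1
  have h (x y : ℝ) : L (x, y) = x * L (1, 0) + y * L (0, 1) := by
    rw [← smul_eq_mul, ← smul_eq_mul, ← L.map_smul, ← L.map_smul, ← L.map_add]
    simp
  have e : (∑ j, ((L.comp ((lin u).prod (lin w))) (Pi.single j 1)) ^ 2 : ℝ)
      = L (1, 0) ^ 2 + L (0, 1) ^ 2 := by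
    have : ∀ j, ((L.comp ((lin u).prod (lin w))) (Pi.single j 1)) ^ 2
        = u j ^ 2 * L (1, 0) ^ 2 + w j ^ 2 * L (0, 1) ^ 2
          + (u j * w j) * (2 * L (1, 0) * L (0, 1)) := by
      intro j
      simp [lin_apply, Pi.single_apply]
      rw [h]; ring
    simp_rw [this, Finset.sum_add_distrib, ← Finset.sum_mul, hu, hw, huw]
    ring
  rw [e]
  simp
  ring

/-! ### Sign disagreement of two Gaussians -/

lemma integral_r : ∫ r in Set.Ioi (0:ℝ), r * Real.exp (-(1/2) * r ^ 2) = 1 := by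
  have := integral_mul_cexp_neg_mul_sq (b := 1/2) (by norm_num)
  have h := congrArg Complex.re this
  have e : ∀ r : ℝ, (r : ℂ) * Complex.exp (-(1/2) * (r : ℂ) ^ 2)
      = ((r * Real.exp (-(1/2) * r ^ 2) : ℝ) : ℂ) := by intro r; push_cast; rfl
  simp_rw [e, integral_complex_ofReal] at h
  rw [Complex.ofReal_re] at h
  rw [h]; norm_num

open Real in
/-- The directions in the plane whose inner products with two unit vectors at angle `α` have opposite
signs form two opposite sectors of opening `α`. -/
lemma volume_angles (α : ℝ) (h0 : 0 < α) (h1 : α < π / 2) :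
    volume.real {φ : ℝ | φ ∈ Set.Ioo (-π) π ∧ cos φ * cos (φ - α) < 0} = 2 * α := by
  have hp := pi_pos
  have e : {φ : ℝ | φ ∈ Set.Ioo (-π) π ∧ cos φ * cos (φ - α) < 0}
      = Set.Ioo (-(π / 2)) (-(π / 2) + α) ∪ Set.Ioo (π / 2) (π / 2 + α) := by
    ext φ
    simp only [Set.mem_ofPred_eq, Set.mem_union, Set.mem_Ioo, mul_neg_iff]
    have neg1 {x : ℝ} (h1 : x ≤ -(π/2)) (h2 : -(π + π/2) ≤ x) : cos x ≤ 0 := by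
      rw [← cos_neg]; exact cos_nonpos_of_pi_div_two_le_of_le (by linarith) (by linarith)
    have neg1' {x : ℝ} (h1 : x < -(π/2)) (h2 : -(π + π/2) < x) : cos x < 0 := by
      rw [← cos_neg]; exact cos_neg_of_pi_div_two_lt_of_lt (by linarith) (by linarith)
    constructor
    · rintro ⟨⟨a, b⟩, ⟨c, e⟩ | ⟨c, e⟩⟩
      · have h2 : φ < π / 2 := by
          by_contra! h
          exact absurd (cos_nonpos_of_pi_div_two_le_of_le h (by linarith)) (by linarith)
        have h3 : -(π / 2) < φ := by
          by_contra! h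
          exact absurd (neg1 h (by linarith)) (by linarith)
        left
        refine ⟨h3, ?_⟩
        by_contra! h
        exact absurd (cos_nonneg_of_neg_pi_div_two_le_of_le (x := φ - α)
          (by linarith) (by linarith)) (by linarith)
      · have h2 : ¬ (-(π / 2) ≤ φ ∧ φ ≤ π / 2) := fun ⟨h, h'⟩ =>
          absurd (cos_nonneg_of_neg_pi_div_two_le_of_le h h') (by linarith)
        right
        by_cases h : φ ≤ π / 2
        · have : φ < -(π / 2) := by
            by_contra! h'
            exact h2 ⟨h', h⟩
          exact absurd (neg1 (x := φ - α)
          (by linarith) (by linarith)) (by linarith)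
        · push Not at h
          refine ⟨h, ?_⟩
          by_contra! h'
          exact absurd (cos_nonpos_of_pi_div_two_le_of_le (x := φ - α)
          (by linarith) (by linarith)) (by linarith)
    · rintro (⟨a, b⟩ | ⟨a, b⟩)
      · exact ⟨⟨by linarith, by linarith⟩, Or.inl ⟨cos_pos_of_mem_Ioo ⟨by linarith, by linarith⟩,
          neg1' (by linarith) (by linarith)⟩⟩
      · exact ⟨⟨by linarith, by linarith⟩, Or.inr ⟨cos_neg_of_pi_div_two_lt_of_lt (by linarith)
          (by linarith), cos_pos_of_mem_Ioo ⟨by linarith, by linarith⟩⟩⟩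
  rw [e, measureReal_union _ measurableSet_Ioo (by simp) (by simp)]
  · simp [h0.le]; ring
  · rw [Set.disjoint_left]
    rintro x ⟨_, h⟩ ⟨h', _⟩
    linarith

open Real in
/-- The opposite-sign probability in the plane. In polar coordinates the Gaussian density depends
only on the radius, so the probability is the proportion of admissible directions. -/
lemma planar (α : ℝ) (h0 : 0 < α) (h1 : α < π / 2) :
    ((gaussianReal 0 1).prod (gaussianReal 0 1)).real
      {p : ℝ × ℝ | p.1 * (cos α * p.1 + sin α * p.2) < 0} = α / π := by
  set S := {p : ℝ × ℝ | p.1 * (cos α * p.1 + sin α * p.2) < 0} with hS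
  have hSm : MeasurableSet S := measurableSet_lt (by fun_prop) (by fun_prop)
  have hd : (gaussianReal 0 1).prod (gaussianReal 0 1) =
      (volume : Measure (ℝ × ℝ)).withDensity
        (fun p => ENNReal.ofReal ((2 * π)⁻¹ * rexp (-(1/2) * (p.1 ^ 2 + p.2 ^ 2)))) := by
    rw [gaussianReal_of_var_ne_zero _ one_ne_zero, prod_withDensity (by fun_prop) (by fun_prop)]
    rw [← Measure.volume_eq_prod]
    congr 1
    ext p
    rw [gaussianPDF, gaussianPDF, ← ENNReal.ofReal_mul (gaussianPDFReal_nonneg _ _ _),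
      gaussianPDFReal, gaussianPDFReal]
    congr 1
    rw [mul_mul_mul_comm, ← exp_add, ← mul_inv, mul_self_sqrt (by positivity)]
    simp
    ring
  set A := {φ : ℝ | φ ∈ Set.Ioo (-π) π ∧ cos φ * cos (φ - α) < 0} with hA
  have hAm : MeasurableSet A :=
    measurableSet_Ioo.inter (measurableSet_lt (f := fun φ => cos φ * cos (φ - α)) (by fun_prop)
      (measurable_const (a := 0)))
  have key : ∫ p : ℝ × ℝ, S.indicator
      (fun p => (2 * π)⁻¹ * rexp (-(1/2) * (p.1 ^ 2 + p.2 ^ 2))) p = α / π := by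
    rw [← integral_comp_polarCoord_symm, polarCoord_target]
    have : ∀ p ∈ Set.Ioi (0:ℝ) ×ˢ Set.Ioo (-π) π,
        p.1 • S.indicator (fun p : ℝ × ℝ => (2 * π)⁻¹ * rexp (-(1/2) * (p.1 ^ 2 + p.2 ^ 2)))
          (polarCoord.symm p)
        = (p.1 * rexp (-(1/2) * p.1 ^ 2)) * (A.indicator (fun _ => (2 * π)⁻¹) p.2) := by
      rintro ⟨r, φ⟩ ⟨hr, hφ⟩
      simp only [Set.mem_Ioi] at hr hφ
      have e1 : (r * cos φ) ^ 2 + (r * sin φ) ^ 2 = r ^ 2 := by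
        rw [mul_pow, mul_pow, ← mul_add, cos_sq_add_sin_sq, mul_one]
      have e2 : polarCoord.symm (r, φ) ∈ S ↔ φ ∈ A := by
        simp only [hS, hA, polarCoord_symm_apply, Set.mem_ofPred_eq]
        have : r * cos φ * (cos α * (r * cos φ) + sin α * (r * sin φ))
            = r ^ 2 * (cos φ * cos (φ - α)) := by
          rw [cos_sub]; ring
        rw [this]
        have hr2 : 0 < r ^ 2 := by positivity
        exact ⟨fun h => ⟨hφ, (pos_iff_neg_of_mul_neg h).1 hr2⟩,
          fun h => mul_neg_of_pos_of_neg hr2 h.2⟩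
      by_cases h : φ ∈ A
      · rw [Set.indicator_of_mem (e2.2 h), Set.indicator_of_mem h]
        simp only [polarCoord_symm_apply, e1, smul_eq_mul]
        ring
      · rw [Set.indicator_of_notMem (mt e2.1 h), Set.indicator_of_notMem h]
        simp
    rw [setIntegral_congr_fun (measurableSet_Ioi.prod measurableSet_Ioo) this,
      Measure.volume_eq_prod, setIntegral_prod_mul (fun r : ℝ => r * rexp (-(1/2) * r ^ 2))
        (A.indicator (fun _ => (2 * π)⁻¹)), integral_r, setIntegral_indicator hAm]
    have : Set.Ioo (-π) π ∩ A = A := Set.inter_eq_right.2 fun x hx => hx.1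
    rw [this, setIntegral_const, volume_angles α h0 h1]
    simp; field_simp
  rw [Measure.real, hd, withDensity_apply _ hSm, ← lintegral_indicator hSm, ← key,
    integral_eq_lintegral_of_nonneg_ae]
  · congr 1
    refine lintegral_congr fun p => ?_
    by_cases h : p ∈ S <;> simp [h]
  · refine Filter.Eventually.of_forall fun p => Set.indicator_nonneg (fun _ _ => by positivity) _
  · exact (Measurable.indicator (by fun_prop) hSm).aestronglyMeasurable

open Real

/-! ### Counting zeros by sign changes on a grid -/

/-- The `i`-th point of the division of `[-π/2, π/2]` into `m` equal cells. -/
noncomputable def grid (m i : ℕ) : ℝ := -(π / 2) + i * (π / m)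

/-- The indices of the cells of the `m`-th grid at whose endpoints `f` takes values of strictly
opposite signs. -/
noncomputable def signChanges (f : ℝ → ℝ) (m : ℕ) : Finset ℕ :=
  {i ∈ Finset.range m | f (grid m i) * f (grid m (i + 1)) < 0}

lemma grid_succ (m i : ℕ) : grid m (i + 1) = grid m i + π / m := by
  simp [grid]; ring

lemma grid_mono (m : ℕ) : Monotone (grid m) := by
  refine monotone_nat_of_le_succ fun i => ?_
  rw [grid_succ]
  have : 0 ≤ π / m := by positivity
  linarith

lemma grid_self (m : ℕ) (hm : m ≠ 0) : grid m m = π / 2 := by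
  simp [grid]; field_simp; ring

lemma grid_zero (m : ℕ) : grid m 0 = -(π / 2) := by simp [grid]

lemma exists_zero {f : ℝ → ℝ} (hf : Continuous f) {a b : ℝ} (hab : a ≤ b) (h : f a * f b < 0) :
    ∃ z ∈ Set.Ioo a b, f z = 0 := by
  rcases mul_neg_iff.1 h with ⟨h1, h2⟩ | ⟨h1, h2⟩
  · exact intermediate_value_Ioo' hab hf.continuousOn ⟨h2, h1⟩
  · exact intermediate_value_Ioo hab hf.continuousOn ⟨h1, h2⟩

/-- Every sign change forces a zero in its open cell, and distinct cells are disjoint. -/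
lemma signChanges_le {f : ℝ → ℝ} (hf : Continuous f) (m : ℕ)
    (hZ : {z | z ∈ Set.Ioo (-(π / 2)) (π / 2) ∧ f z = 0}.Finite) :
    (signChanges f m).card ≤ {z | z ∈ Set.Ioo (-(π / 2)) (π / 2) ∧ f z = 0}.ncard := by
  have H : ∀ i : ℕ, ∃ z, i ∈ signChanges f m →
      z ∈ Set.Ioo (grid m i) (grid m (i + 1)) ∧ f z = 0 := by
    intro i
    by_cases hi : i ∈ signChanges f m
    · obtain ⟨z, hz, hz'⟩ := exists_zero hf (grid_mono m (Nat.le_succ i))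
        (Finset.mem_filter.1 hi).2
      exact ⟨z, fun _ => ⟨hz, hz'⟩⟩
    · exact ⟨0, fun h => absurd h hi⟩
  choose g hg using H
  rw [← Set.ncard_coe_finset]
  refine Set.ncard_le_ncard_of_injOn g ?_ ?_ hZ
  · intro i hi
    have hi' := hg i hi
    have him := Finset.mem_range.1 (Finset.mem_filter.1 hi).1
    refine ⟨⟨?_, ?_⟩, hi'.2⟩
    · rw [← grid_zero m]
      exact (grid_mono m (Nat.zero_le i)).trans_lt hi'.1.1
    · rw [← grid_self m (by lia)]
      exact hi'.1.2.trans_le (grid_mono m him)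
  · intro i hi j hj hij
    have h1 := (hg i hi).1
    have h2 := (hg j hj).1
    replace hij : g i = g j := hij
    rw [hij] at h1
    by_contra hne
    rcases Nat.lt_or_gt_of_ne hne with h | h
    · have := grid_mono m (Nat.succ_le_of_lt h)
      exact absurd (h1.2.trans_le this) (not_lt.2 h2.1.le)
    · have := grid_mono m (Nat.succ_le_of_lt h)
      exact absurd (h2.2.trans_le this) (not_lt.2 h1.1.le)

lemma local_sign {f : ℝ → ℝ} {z f' : ℝ} (hf : HasDerivAt f f' z) (hz : f z = 0) (h0 : f' ≠ 0) :
    ∃ ε > 0, ∀ x ∈ Set.Ioo (z - ε) z, ∀ y ∈ Set.Ioo z (z + ε), f x * f y < 0 := by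
  wlog hpos : 0 < f' generalizing f f'
  · obtain ⟨ε, hε, H⟩ := this hf.neg (by simp [hz]) (neg_ne_zero.2 h0)
      (by rcases lt_or_gt_of_ne h0 with h | h <;> [linarith; exact absurd h hpos])
    exact ⟨ε, hε, fun x hx y hy => by simpa using H x hx y hy⟩
  have h1 := (hasDerivAt_iff_tendsto_slope.1 hf).eventually (lt_mem_nhds hpos)
  rw [eventually_nhdsWithin_iff, Metric.eventually_nhds_iff] at h1
  obtain ⟨ε, hε, H⟩ := h1
  refine ⟨ε, hε, fun x hx y hy => ?_⟩
  have hx' := H (y := x) (by rw [Real.dist_eq, abs_lt]; constructor <;> linarith [hx.1, hx.2])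
    (ne_of_lt hx.2)
  have hy' := H (y := y) (by rw [Real.dist_eq, abs_lt]; constructor <;> linarith [hy.1, hy.2])
    (ne_of_gt hy.1)
  rw [slope_def_field, hz, sub_zero] at hx' hy'
  have a : f x < 0 := by
    by_contra! h
    exact absurd (div_nonpos_of_nonneg_of_nonpos h (by linarith [hx.2] : x - z ≤ 0)) (by linarith)
  have b : 0 < f y := by
    by_contra! h
    exact absurd (div_nonpos_of_nonpos_of_nonneg h (by linarith [hy.1] : 0 ≤ y - z)) (by linarith)
  exact mul_neg_of_neg_of_pos a b

lemma exists_cell {f : ℝ → ℝ} {m : ℕ} (hm : m ≠ 0) (hg : ∀ i, f (grid m i) ≠ 0) {z : ℝ}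
    (hz : z ∈ Set.Ioo (-(π / 2)) (π / 2)) (hfz : f z = 0) :
    ∃ i < m, z ∈ Set.Ioo (grid m i) (grid m (i + 1)) := by
  have hP : ∃ i, z < grid m i := ⟨m, by rw [grid_self m hm]; exact hz.2⟩
  classical
  have h1 := Nat.find_spec hP
  have h2 : Nat.find hP ≠ 0 := by
    intro h
    rw [h, grid_zero] at h1
    linarith [hz.1]
  obtain ⟨i, hi⟩ := Nat.exists_eq_succ_of_ne_zero h2
  have h3 : ¬ z < grid m i := Nat.find_min hP (by lia)
  have h4 : Nat.find hP ≤ m := Nat.find_min' hP (by rw [grid_self m hm]; exact hz.2)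
  rw [hi] at h1
  refine ⟨i, by lia, lt_of_le_of_ne (not_lt.1 h3) ?_, h1⟩
  intro h
  exact hg i (h ▸ hfz)

/-- If the zeros are finitely many, simple and off the grids, then for a fine grid each cell contains
at most one zero, and `f` changes sign over every cell containing a zero. -/
lemma eventually_signChanges {f : ℝ → ℝ} (hf : Continuous f)
    (hZ : {z | z ∈ Set.Ioo (-(π / 2)) (π / 2) ∧ f z = 0}.Finite)
    (hsimple : ∀ z ∈ Set.Ioo (-(π / 2)) (π / 2), f z = 0 → ∃ f' ≠ 0, HasDerivAt f f' z)
    (hg : ∀ m i, f (grid m i) ≠ 0) :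
    ∀ᶠ m in Filter.atTop,
      (signChanges f m).card = {z | z ∈ Set.Ioo (-(π / 2)) (π / 2) ∧ f z = 0}.ncard := by
  set Z := {z | z ∈ Set.Ioo (-(π / 2)) (π / 2) ∧ f z = 0} with hZdef
  have hlim : Filter.Tendsto (fun m : ℕ => π / m) Filter.atTop (nhds 0) :=
    tendsto_const_div_atTop_nhds_zero_nat π
  have h1 : ∀ᶠ m : ℕ in Filter.atTop, ∀ z ∈ Z,
      ∀ x ∈ Set.Ioo (z - π / m) z, ∀ y ∈ Set.Ioo z (z + π / m), f x * f y < 0 := by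
    rw [Filter.eventually_all_finite hZ]
    intro z hz
    obtain ⟨f', h0, hd⟩ := hsimple z hz.1 hz.2
    obtain ⟨ε, hε, H⟩ := local_sign hd hz.2 h0
    filter_upwards [hlim.eventually (gt_mem_nhds hε)] with m hm x hx y hy
    exact H x ⟨by linarith [hx.1], hx.2⟩ y ⟨hy.1, by linarith [hy.2]⟩
  have h2 : ∀ᶠ m : ℕ in Filter.atTop, ∀ z ∈ Z, ∀ w ∈ Z, z ≠ w → π / m < |z - w| := by
    rw [Filter.eventually_all_finite hZ]
    intro z hz
    rw [Filter.eventually_all_finite hZ]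
    intro w hw
    by_cases h : z = w
    · simp [h]
    · filter_upwards [hlim.eventually (gt_mem_nhds (abs_pos.2 (sub_ne_zero.2 h)))] with m hm _
      exact hm
  filter_upwards [h1, h2, Filter.eventually_ne_atTop 0] with m h1 h2 hm
  refine le_antisymm (signChanges_le hf m hZ) ?_
  have H : ∀ z : ℝ, ∃ i : ℕ, z ∈ Z → i < m ∧ z ∈ Set.Ioo (grid m i) (grid m (i + 1)) := by
    intro z
    by_cases hz : z ∈ Z
    · obtain ⟨i, hi⟩ := exists_cell hm (hg m) hz.1 hz.2
      exact ⟨i, fun _ => hi⟩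
    · exact ⟨0, fun h => absurd h hz⟩
  choose g hg' using H
  rw [← Set.ncard_coe_finset]
  refine Set.ncard_le_ncard_of_injOn g ?_ ?_ (Finset.finite_toSet _)
  · intro z hz
    obtain ⟨hi, hzi⟩ := hg' z hz
    have := grid_succ m (g z)
    refine Finset.mem_coe.2 (Finset.mem_filter.2 ⟨Finset.mem_range.2 hi, h1 z hz _ ?_ _ ?_⟩)
    · exact ⟨by linarith [hzi.2], hzi.1⟩
    · exact ⟨hzi.2, by linarith [hzi.1]⟩
  · intro z hz w hw hzw
    by_contra hne
    have a := (hg' z hz).2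
    have b := (hg' w hw).2
    replace hzw : g z = g w := hzw
    rw [hzw] at a
    have := h2 z hz w hw hne
    have hs := grid_succ m (g w)
    have : |z - w| < π / m := by
      rw [abs_lt]; constructor <;> linarith [a.1, a.2, b.1, b.2]
    linarith

/-! ### The angle between neighbouring points of the curve -/

/-- The sine of the angle `arccos (cos δ ^ d)` for `0 < δ < π / 2`. The factorisation
`1 - cos δ ^ (2 d) = sin δ ^ 2 * ∑ k < d, cos δ ^ (2 k)` makes it smooth at `δ = 0`. -/
noncomputable def sinAngle (d : ℕ) (δ : ℝ) : ℝ := sin δ * √(∑ k ∈ Finset.range d, (cos δ ^ 2) ^ k)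

/-- The angle between two points of `curve d` whose parameters differ by `δ ∈ (0, π / 2)`; see
`cos_angle`. Defined by `arcsin` rather than `arccos`, as `arccos` is not differentiable at `1`. -/
noncomputable def angle (d : ℕ) (δ : ℝ) : ℝ := arcsin (sinAngle d δ)

lemma sinAngle_sq (d : ℕ) (δ : ℝ) : sinAngle d δ ^ 2 + (cos δ ^ d) ^ 2 = 1 := by
  have h := geom_sum_mul (cos δ ^ 2) d
  rw [sinAngle, mul_pow, sq_sqrt (Finset.sum_nonneg fun _ _ => by positivity), sin_sq,
    ← pow_mul, mul_comm d 2, pow_mul]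
  linear_combination -h

lemma cos_angle (d : ℕ) {δ : ℝ} (h0 : 0 < δ) (h1 : δ < π / 2) :
    cos (angle d δ) = cos δ ^ d := by
  rw [angle, cos_arcsin, ← sinAngle_sq d δ, add_sub_cancel_left, sqrt_sq]
  exact pow_nonneg (cos_pos_of_mem_Ioo ⟨by linarith, h1⟩).le _

lemma angle_mem {d : ℕ} (hd : 1 ≤ d) {δ : ℝ} (h0 : 0 < δ) (h1 : δ < π / 2) :
    0 < angle d δ ∧ angle d δ < π / 2 := by
  have hc := cos_pos_of_mem_Ioo (x := δ) ⟨by linarith, h1⟩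
  have hs := sin_pos_of_pos_of_lt_pi h0 (by linarith)
  constructor
  · refine arcsin_pos.2 (mul_pos hs (sqrt_pos.2 (Finset.sum_pos (fun _ _ => by positivity) ?_)))
    simp; lia
  · refine arcsin_lt_pi_div_two.2 ?_
    have := sinAngle_sq d δ
    have : 0 < (cos δ ^ d) ^ 2 := by positivity
    nlinarith

/-- The angle grows at rate `√d` at `δ = 0`: this is the speed of `curve d`. -/
lemma hasDerivAt_angle {d : ℕ} (hd : 1 ≤ d) : HasDerivAt (angle d) (√d) 0 := by
  have h0 : sinAngle d 0 = 0 := by simp [sinAngle]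
  have hS : DifferentiableAt ℝ (fun δ => √(∑ k ∈ Finset.range d, (cos δ ^ 2) ^ k)) 0 := by
    refine DifferentiableAt.sqrt (by fun_prop) ?_
    simp; lia
  have h1 : HasDerivAt (sinAngle d) (√d) 0 := by
    have := (hasDerivAt_sin 0).mul hS.hasDerivAt
    refine HasDerivAt.congr_deriv this ?_
    simp
  have h2 : HasDerivAt arcsin 1 (sinAngle d 0) := by
    rw [h0]
    simpa using hasDerivAt_arcsin (x := 0) (by norm_num) (by norm_num)
  exact (h2.comp 0 h1).congr_deriv (one_mul _)

lemma tendsto_angle {d : ℕ} (hd : 1 ≤ d) :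
    Filter.Tendsto (fun m : ℕ => m * (angle d (π / m) / π)) Filter.atTop (nhds (√d)) := by
  have h := hasDerivAt_iff_tendsto_slope.1 (hasDerivAt_angle hd)
  have hlim : Filter.Tendsto (fun m : ℕ => π / m) Filter.atTop (nhdsWithin 0 {0}ᶜ) := by
    refine tendsto_nhdsWithin_iff.2 ⟨tendsto_const_div_atTop_nhds_zero_nat π, ?_⟩
    filter_upwards [Filter.eventually_ne_atTop 0] with m hm
    simp [pi_ne_zero, hm]
  refine (h.comp hlim).congr fun m => ?_
  have : angle d 0 = 0 := by simp [angle, sinAngle]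
  simp only [Function.comp, slope_def_field, this, sub_zero]
  rw [div_div_eq_mul_div]; ring

/-! ### The polynomial as a linear form along a spherical curve -/

/-- Two Gaussian linear forms given by unit vectors at angle `α` have opposite signs with probability
`α / π`. -/
lemma pair_prob {d : ℕ} (u v : Fin (d + 1) → ℝ) (α : ℝ) (h0 : 0 < α) (h1 : α < π / 2)
    (hu : ∑ j, u j ^ 2 = 1) (hv : ∑ j, v j ^ 2 = 1) (huv : ∑ j, u j * v j = cos α) :
    (kssGauss d).real {a | (∑ j, a j * u j) * (∑ j, a j * v j) < 0} = α / π := by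
  have hs : 0 < sin α := sin_pos_of_pos_of_lt_pi h0 (by linarith)
  -- Gram-Schmidt: `v = cos α • u + sin α • w` with `w` a unit vector orthogonal to `u`.
  set w : Fin (d + 1) → ℝ := fun j => (v j - cos α * u j) / sin α with hw
  have hw1 : ∑ j, w j ^ 2 = 1 := by
    have : ∀ j, w j ^ 2 = (v j ^ 2 - 2 * cos α * (u j * v j) + cos α ^ 2 * u j ^ 2) / sin α ^ 2 := by
      intro j; simp only [hw]; ring
    simp_rw [this]
    rw [← Finset.sum_div, Finset.sum_add_distrib, Finset.sum_sub_distrib, ← Finset.mul_sum,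
      ← Finset.mul_sum, hu, hv, huv, div_eq_one_iff_eq (by positivity), sin_sq]
    ring
  have hw2 : ∑ j, u j * w j = 0 := by
    have : ∀ j, u j * w j = (u j * v j - cos α * u j ^ 2) / sin α := by
      intro j; simp only [hw]; ring
    simp_rw [this]
    rw [← Finset.sum_div, Finset.sum_sub_distrib, ← Finset.mul_sum, hu, huv]
    simp
  rw [← planar α h0 h1, ← map_lin_prod u w hu hw1 hw2, map_measureReal_apply (by fun_prop)
    (measurableSet_lt (by fun_prop) (by fun_prop))]
  congr 1
  ext a
  have : ∑ j, a j * v j = cos α * lin u a + sin α * lin w a := by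
    rw [lin_apply, lin_apply, Finset.mul_sum, Finset.mul_sum, ← Finset.sum_add_distrib]
    refine Finset.sum_congr rfl fun j _ => ?_
    simp only [hw]; field_simp; ring
  simp only [this, Set.mem_preimage, Set.mem_ofPred_eq, ContinuousLinearMap.prod_apply, ← lin_apply u]

/-- The point of the unit sphere of `ℝ^(d+1)` with coordinates
`√(binomial d j) cos^(d-j) θ sin^j θ`. -/
noncomputable def curve (d : ℕ) (θ : ℝ) (j : Fin (d + 1)) : ℝ :=
  √(d.choose j) * cos θ ^ (d - j : ℕ) * sin θ ^ (j : ℕ)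

/-- The inner product of `a` with `curve d θ`, that is, `cos θ ^ d` times the value at `tan θ` of the
polynomial with coefficients `a` whenever `cos θ ≠ 0`; see `trigForm_eq`. -/
noncomputable def trigForm {d : ℕ} (a : Fin (d + 1) → ℝ) (θ : ℝ) : ℝ := ∑ j, a j * curve d θ j

lemma sum_curve_mul (d : ℕ) (s t : ℝ) : ∑ j, curve d s j * curve d t j = cos (t - s) ^ d := by
  rw [cos_sub, add_comm (cos t * cos s), add_pow, ← Fin.sum_univ_eq_sum_range
    (fun k => (sin t * sin s) ^ k * (cos t * cos s) ^ (d - k) * (d.choose k : ℝ))]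
  refine Finset.sum_congr rfl fun j _ => ?_
  have : √(d.choose j : ℝ) * √(d.choose j : ℝ) = d.choose j := mul_self_sqrt (by positivity)
  rw [curve, curve, mul_pow, mul_pow]
  linear_combination (cos s ^ (d - j : ℕ) * sin s ^ (j : ℕ) * (cos t ^ (d - j : ℕ) * sin t ^ (j : ℕ))) * this

lemma sum_curve_sq (d : ℕ) (s : ℝ) : ∑ j, curve d s j ^ 2 = 1 := by
  simp_rw [sq, sum_curve_mul]
  simp

lemma continuous_trigForm {d : ℕ} (a : Fin (d + 1) → ℝ) : Continuous (trigForm a) := by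
  unfold trigForm curve
  fun_prop

lemma eval_kssPoly {d : ℕ} (a : Fin (d + 1) → ℝ) (x : ℝ) :
    (kssPoly d a).eval x = ∑ j, a j * √(d.choose j) * x ^ (j : ℕ) := by
  simp [kssPoly, eval_finsetSum]

lemma eval_derivative_kssPoly {d : ℕ} (a : Fin (d + 1) → ℝ) (x : ℝ) :
    (derivative (kssPoly d a)).eval x
      = ∑ j, a j * √(d.choose j) * ((j : ℕ) * x ^ ((j : ℕ) - 1)) := by
  simp [kssPoly, eval_finsetSum, derivative_X_pow]

lemma trigForm_eq {d : ℕ} (a : Fin (d + 1) → ℝ) {θ : ℝ} (h : cos θ ≠ 0) :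
    trigForm a θ = cos θ ^ d * (kssPoly d a).eval (tan θ) := by
  rw [eval_kssPoly, Finset.mul_sum, trigForm]
  refine Finset.sum_congr rfl fun j _ => ?_
  have : cos θ ^ d = cos θ ^ (d - j : ℕ) * cos θ ^ (j : ℕ) := by
    rw [← pow_add]; congr 1; lia
  rw [curve, this, tan_eq_sin_div_cos, div_pow]
  field_simp

/-- If the polynomial has no multiple real root, then the zeros of `trigForm a` in `(-π/2, π/2)` are
simple. -/
lemma trigForm_simple {d : ℕ} (a : Fin (d + 1) → ℝ)
    (ha : ¬ ∃ x, (kssPoly d a).eval x = 0 ∧ (derivative (kssPoly d a)).eval x = 0)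
    {z : ℝ} (hz : z ∈ Set.Ioo (-(π / 2)) (π / 2)) (h : trigForm a z = 0) :
    ∃ f' ≠ 0, HasDerivAt (trigForm a) f' z := by
  have hc : 0 < cos z := cos_pos_of_mem_Ioo hz
  have hp : (kssPoly d a).eval (tan z) = 0 := by
    rw [trigForm_eq a hc.ne'] at h
    exact (mul_eq_zero.1 h).resolve_left (by positivity)
  have hp' : (derivative (kssPoly d a)).eval (tan z) ≠ 0 := fun h' => ha ⟨_, hp, h'⟩
  have hd : HasDerivAt (fun θ => cos θ ^ d * (kssPoly d a).eval (tan θ)) _ z :=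
    ((hasDerivAt_cos z).fun_pow d).fun_mul
      (((kssPoly d a).hasDerivAt (tan z)).comp z (hasDerivAt_tan hc.ne'))
  refine ⟨_, ?_, hd.congr_of_eventuallyEq ?_⟩
  · rw [hp]
    simp only [mul_zero, zero_add]
    positivity
  · filter_upwards [isOpen_Ioo.mem_nhds hz] with θ hθ
    exact trigForm_eq a (cos_pos_of_mem_Ioo hθ).ne'

lemma tan_image_zeros {d : ℕ} (a : Fin (d + 1) → ℝ) :
    tan '' {z | z ∈ Set.Ioo (-(π / 2)) (π / 2) ∧ trigForm a z = 0}
      = {x | (kssPoly d a).eval x = 0} := by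
  ext x
  constructor
  · rintro ⟨z, ⟨hz, h⟩, rfl⟩
    have hc : 0 < cos z := cos_pos_of_mem_Ioo hz
    rw [trigForm_eq a hc.ne'] at h
    exact (mul_eq_zero.1 h).resolve_left (by positivity)
  · intro hx
    refine ⟨arctan x, ⟨arctan_mem_Ioo x, ?_⟩, tan_arctan x⟩
    rw [trigForm_eq a (cos_arctan_pos x).ne', tan_arctan, hx, mul_zero]

lemma ncard_zeros {d : ℕ} (a : Fin (d + 1) → ℝ) :
    {z | z ∈ Set.Ioo (-(π / 2)) (π / 2) ∧ trigForm a z = 0}.ncard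
      = numRealZeros (kssPoly d a) := by
  rw [numRealZeros, ← tan_image_zeros, Set.InjOn.ncard_image]
  exact injOn_tan.mono fun z hz => hz.1

lemma natDegree_kssPoly_le {d : ℕ} (a : Fin (d + 1) → ℝ) : (kssPoly d a).natDegree ≤ d := by
  refine natDegree_sum_le_of_forall_le _ _ fun j _ => ?_
  exact (natDegree_C_mul_X_pow_le _ _).trans (by lia)

lemma finite_zeros {p : ℝ[X]} (hp : p ≠ 0) : {x | p.eval x = 0}.Finite := by
  have := p.roots.toFinset.finite_toSet
  refine this.subset fun x hx => ?_
  simpa [hp] using hx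

lemma numRealZeros_le {p : ℝ[X]} (hp : p ≠ 0) : numRealZeros p ≤ p.natDegree := by
  have : {x | p.eval x = 0} = (p.roots.toFinset : Set ℝ) := by
    ext x; simp [hp]
  rw [numRealZeros, this, Set.ncard_coe_finset]
  exact (Multiset.toFinset_card_le _).trans (card_roots' p)

/-! ### Almost sure regularity -/

/-- For a fixed polynomial `q`, only finitely many constants `y` give `y + q` a multiple real root: `-y`
is a critical value of `q`. For constant `q` every point is critical, but there is only one
value. -/
lemma finite_critical (q : ℝ[X]) :
    {y : ℝ | ∃ x, y + q.eval x = 0 ∧ (derivative q).eval x = 0}.Finite := by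
  by_cases h : derivative q = 0
  · have := derivative_eq_zero.1 h
    obtain ⟨c, rfl⟩ := natDegree_eq_zero.1 this
    refine (Set.finite_singleton (-c)).subset ?_
    rintro y ⟨x, hx, -⟩
    simp only [eval_C] at hx
    exact eq_neg_of_add_eq_zero_left hx
  · refine ((finite_zeros h).image fun x => -q.eval x).subset ?_
    rintro y ⟨x, hx, hx'⟩
    exact ⟨x, hx', by simp only; linarith⟩

/-- The set of coefficients with a multiple real root is a countable union of closed sets: restrict the
root to `[-k, k]` and project along this compact interval. -/
lemma measurableSet_multiple (d : ℕ) : MeasurableSet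
    {a : Fin (d + 1) → ℝ |
      ∃ x, (kssPoly d a).eval x = 0 ∧ (derivative (kssPoly d a)).eval x = 0} := by
  have : {a : Fin (d + 1) → ℝ |
      ∃ x, (kssPoly d a).eval x = 0 ∧ (derivative (kssPoly d a)).eval x = 0}
      = ⋃ k : ℕ, Prod.snd '' {q : Set.Icc (-(k : ℝ)) k × (Fin (d + 1) → ℝ) |
        (kssPoly d q.2).eval (q.1 : ℝ) = 0 ∧
          (derivative (kssPoly d q.2)).eval (q.1 : ℝ) = 0} := by
    ext a
    simp only [Set.mem_ofPred_eq, Set.mem_iUnion, Set.mem_image, Prod.exists,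
      exists_eq_right, Subtype.exists]
    constructor
    · rintro ⟨x, hx⟩
      obtain ⟨k, hk⟩ := exists_nat_ge |x|
      exact ⟨k, x, ⟨neg_le_of_abs_le hk, le_of_abs_le hk⟩, hx⟩
    · rintro ⟨k, x, _, hx⟩
      exact ⟨x, hx⟩
  rw [this]
  refine MeasurableSet.iUnion fun k => IsClosed.measurableSet ?_
  refine isClosedMap_snd_of_compactSpace _ ?_
  simp_rw [eval_kssPoly, eval_derivative_kssPoly]
  exact (isClosed_eq (by fun_prop) continuous_const).inter
    (isClosed_eq (by fun_prop) continuous_const)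

/-- By Fubini in the constant coefficient, since with the other coefficients fixed only finitely many
constant coefficients are bad. -/
lemma ae_no_multiple (d : ℕ) : ∀ᵐ a ∂(kssGauss d),
    ¬ ∃ x, (kssPoly d a).eval x = 0 ∧ (derivative (kssPoly d a)).eval x = 0 := by
  rw [ae_iff]
  simp only [not_not]
  set B := {a : Fin (d + 1) → ℝ |
      ∃ x, (kssPoly d a).eval x = 0 ∧ (derivative (kssPoly d a)).eval x = 0} with hB
  have hBm : MeasurableSet B := measurableSet_multiple d
  have mp := (measurePreserving_piFinSuccAbove (fun _ : Fin (d + 1) => gaussianReal 0 1) 0).symm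
  rw [kssGauss, ← mp.map_eq, Measure.map_apply mp.measurable hBm,
    Measure.prod_apply_symm (mp.measurable hBm)]
  refine (lintegral_congr fun b => ?_).trans lintegral_zero
  have : NullSingletonClass (gaussianReal 0 1) := nullSingletonClass_gaussianReal one_ne_zero
  set q : ℝ[X] := ∑ j : Fin d, C (b j * √(d.choose (j.succ : ℕ))) * X ^ (j.succ : ℕ) with hq
  refine ((finite_critical q).subset ?_).measure_zero _
  rintro y ⟨x, hx, hx'⟩
  have e : kssPoly d ((MeasurableEquiv.piFinSuccAbove (fun _ => ℝ) 0).symm (y, b))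
      = C y + q := by
    rw [kssPoly, Fin.sum_univ_succ]
    simp [MeasurableEquiv.piFinSuccAbove, hq]
  rw [e] at hx hx'
  exact ⟨x, by simpa using hx, by simpa using hx'⟩

lemma ae_trigForm_ne (d : ℕ) (θ : ℝ) : ∀ᵐ a ∂(kssGauss d), trigForm a θ ≠ 0 := by
  have : NullSingletonClass (gaussianReal 0 1) := nullSingletonClass_gaussianReal one_ne_zero
  rw [ae_iff]
  have h := map_lin (curve d θ) (sum_curve_sq d θ)
  have h0 : (kssGauss d).map (lin (curve d θ)) {0} = 0 := by rw [h]; exact measure_singleton 0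
  rw [Measure.map_apply (by fun_prop) (measurableSet_singleton 0)] at h0
  convert h0 using 2
  ext a
  simp [trigForm, lin_apply]

lemma measurableSet_change {d : ℕ} (s t : ℝ) :
    MeasurableSet {a : Fin (d + 1) → ℝ | trigForm a s * trigForm a t < 0} := by
  unfold trigForm
  exact measurableSet_lt (by fun_prop) (by fun_prop)

/-! ### Expected number of sign changes and of zeros -/

lemma card_signChanges_eq {d : ℕ} (m : ℕ) (a : Fin (d + 1) → ℝ) :
    ((signChanges (trigForm a) m).card : ℝ) = ∑ i ∈ Finset.range m,
      {a : Fin (d + 1) → ℝ | trigForm a (grid m i) * trigForm a (grid m (i + 1)) < 0}.indicator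
        (fun _ => (1 : ℝ)) a := by
  rw [signChanges, Finset.card_filter]
  push_cast
  refine Finset.sum_congr rfl fun i _ => ?_
  simp [Set.indicator_apply]

lemma integral_signChanges {d : ℕ} (hd : 1 ≤ d) {m : ℕ} (hm : 3 ≤ m) :
    ∫ a, ((signChanges (trigForm a) m).card : ℝ) ∂(kssGauss d) = m * (angle d (π / m) / π) := by
  have hm' : (3 : ℝ) ≤ m := by exact_mod_cast hm
  have h0 : 0 < π / m := by positivity
  have h1 : π / m < π / 2 := div_lt_div_of_pos_left pi_pos (by norm_num) (by linarith)
  simp_rw [card_signChanges_eq]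
  rw [integral_finsetSum _ fun i _ => (integrable_const _).indicator (measurableSet_change _ _)]
  have : ∀ i ∈ Finset.range m, ∫ a, {a : Fin (d + 1) → ℝ |
      trigForm a (grid m i) * trigForm a (grid m (i + 1)) < 0}.indicator
        (fun _ => (1 : ℝ)) a ∂(kssGauss d) = angle d (π / m) / π := by
    intro i _
    rw [integral_indicator_const _ (measurableSet_change _ _), smul_eq_mul, mul_one]
    refine pair_prob _ _ _ (angle_mem hd h0 h1).1 (angle_mem hd h0 h1).2 (sum_curve_sq _ _)
      (sum_curve_sq _ _) ?_
    rw [sum_curve_mul, cos_angle d h0 h1, grid_succ, add_sub_cancel_left]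
  rw [Finset.sum_congr rfl this]
  simp

/-- The expected number of real roots of a KSS random polynomial of degree `d ≥ 1`
equals `√d`. -/
theorem kss_expected_number_of_real_zeros (d : ℕ) (hd : 1 ≤ d) :
    ∫ a, (numRealZeros (kssPoly d a) : ℝ) ∂(kssGauss d) = Real.sqrt d := by
  have good : ∀ᵐ a ∂(kssGauss d), (∀ m i, trigForm a (grid m i) ≠ 0) ∧
      ¬ ∃ x, (kssPoly d a).eval x = 0 ∧ (derivative (kssPoly d a)).eval x = 0 := by
    refine Filter.Eventually.and ?_ (ae_no_multiple d)
    rw [ae_all_iff]; intro m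
    rw [ae_all_iff]; intro i
    exact ae_trigForm_ne d _
  have hne : ∀ a : Fin (d + 1) → ℝ,
      (¬ ∃ x, (kssPoly d a).eval x = 0 ∧ (derivative (kssPoly d a)).eval x = 0) →
      kssPoly d a ≠ 0 := by
    rintro a ha h
    exact ha ⟨0, by simp [h]⟩
  have hfin : ∀ a : Fin (d + 1) → ℝ, kssPoly d a ≠ 0 →
      {z | z ∈ Set.Ioo (-(π / 2)) (π / 2) ∧ trigForm a z = 0}.Finite := by
    intro a ha
    refine Set.Finite.of_finite_image (f := tan) ?_ (injOn_tan.mono fun z hz => hz.1)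
    rw [tan_image_zeros]
    exact finite_zeros ha
  have lim : Filter.Tendsto
      (fun m : ℕ => ∫ a, ((signChanges (trigForm a) m).card : ℝ) ∂(kssGauss d)) Filter.atTop
      (nhds (∫ a, (numRealZeros (kssPoly d a) : ℝ) ∂(kssGauss d))) := by
    refine tendsto_integral_of_dominated_convergence (fun _ => (d : ℝ)) ?_ (integrable_const _)
      ?_ ?_
    · intro m
      simp_rw [card_signChanges_eq]
      exact (Finset.measurable_fun_sum _ fun i _ =>
        measurable_const.indicator (measurableSet_change _ _)).aestronglyMeasurable
    · intro m
      filter_upwards [good] with a ha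
      have hp := hne a ha.2
      rw [Real.norm_natCast, Nat.cast_le]
      refine (signChanges_le (continuous_trigForm a) m (hfin a hp)).trans ?_
      rw [ncard_zeros]
      exact (numRealZeros_le hp).trans (natDegree_kssPoly_le a)
    · filter_upwards [good] with a ha
      refine tendsto_const_nhds.congr' ?_
      filter_upwards [eventually_signChanges (continuous_trigForm a) (hfin a (hne a ha.2))
        (fun z hz h => trigForm_simple a ha.2 hz h) ha.1] with m hm
      rw [hm, ncard_zeros]
  refine tendsto_nhds_unique lim ((tendsto_angle hd).congr' ?_)
  filter_upwards [Filter.eventually_ge_atTop 3] with m hm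
  exact (integral_signChanges hd hm).symm
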